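/- Let γ ⊆ {1,…,s} and let δ = {δ_k ≥ 2 : k ∈ γ} and b = {b_k ≥ 0 : k ∈ γ} be lists of integers. For each k ∈ γ, let J_k = {\overline{b_k}, \overline{b_k+1}, …, \overline{b_k+δ_k−2}} be the corresponding list of consecutive integers modulo r_k, and set A_k = {i ∈ I : i(k) ∈ J_k}. If C is a nonzero abelian code in A_q(r_1,…,r_s) satisfying ∪_{k∈γ} A_k ⊆ D_α(C) for some α ∈ U, then d*(C) ≥ ∏_{k∈γ} δ_k. -/

import Mathlib

open Classical

noncomputable section

namespace AbelianCodes

/-- The index set `I = Z_{r 0} × ⋯ × Z_{r (s-1)}`. -/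
abbrev Idx {s : ℕ} (r : Fin s → ℕ) : Type := ∀ k, ZMod (r k)

variable {F : Type*} [Field F]

/-- The support of a hypermatrix. -/
def hsupp {s : ℕ} {r : Fin s → ℕ} (M : Idx r → F) : Set (Idx r) := {i | M i ≠ 0}

/-- The hypercolumn `H_M(k,b)` of a hypermatrix, viewed as an `(s-1)`-dimensional
hypermatrix indexed by `∏_{j ≠ k} Z_{r j}`. -/
def hypercol {s : ℕ} {r : Fin (s+1) → ℕ} (M : Idx r → F) (k : Fin (s+1)) (b : ZMod (r k)) :
    Idx (fun j => r (k.succAbove j)) → F :=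
  fun i => M (k.insertNth b i)

/-- `ω_M(k,b)`: the number of consecutive zero hypercolumns
`H_M(k,b+1), H_M(k,b+2), …` (indices modulo `r k`). -/
def runLen {s : ℕ} {r : Fin (s+1) → ℕ} (M : Idx r → F) (k : Fin (s+1)) (b : ZMod (r k)) : ℕ :=
  ((Finset.Ico 1 (r k)).filter
    (fun j => ∀ m : ℕ, m ∈ Finset.Icc 1 j → hypercol M k (b + (m : ZMod (r k))) = 0)).card

/-- The apparent distance `d*(M)` of a hypermatrix, defined recursively on the
number of variables.  (A `0`-dimensional hypermatrix is a scalar, of apparent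
distance `1` if nonzero and `0` otherwise; with this convention the `1`-dimensional
case becomes `max {ω_M(b)+1 : a_b ≠ 0}` and the higher-dimensional case becomes
`max_k max {(ω_M(k,b)+1)·d*(H_M(k,b)) : H_M(k,b) ≠ 0}`, since zero hypermatrices
have apparent distance `0`.) -/
def apd : {s : ℕ} → (r : Fin s → ℕ) → (Idx r → F) → ℕ
  | 0, _, M => if M finZeroElim = 0 then 0 else 1
  | _+1, r, M =>
      Finset.univ.sup fun k =>
        Finset.univ.sup fun b : Fin (r k) =>
          (runLen M k ((b : ℕ) : ZMod (r k)) + 1) *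
            apd (fun j => r (k.succAbove j)) (hypercol M k ((b : ℕ) : ZMod (r k)))

/-- The `q^t`-orbit `Q_t(a)` of `a ∈ I`. -/
def qOrbit {s : ℕ} (r : Fin s → ℕ) (q t : ℕ) (a : Idx r) : Set (Idx r) :=
  {i | ∃ n : ℕ, ∀ k, i k = (q : ZMod (r k)) ^ (t * n) * a k}

/-- `D` is a union of `q^t`-orbits. -/
def OrbitUnion {s : ℕ} (r : Fin s → ℕ) (q t : ℕ) (D : Set (Idx r)) : Prop :=
  ∀ a ∈ D, qOrbit r q t a ⊆ D

/-- The hypermatrix afforded by `D ⊆ I`: entry `0` at indices in `D`, entry `1` elsewhere. -/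
def afforded {s : ℕ} (r : Fin s → ℕ) (D : Set (Idx r)) : Idx r → F :=
  fun i => if i ∈ D then 0 else 1

/-- `M` is a `q^t`-orbits hypermatrix, i.e. the hypermatrix afforded by some union
of `q^t`-orbits. -/
def IsOrbitMx {s : ℕ} (r : Fin s → ℕ) (q t : ℕ) (M : Idx r → F) : Prop :=
  ∃ D : Set (Idx r), OrbitUnion r q t D ∧ M = afforded r D

/-- The minimum apparent distance `mad(M) = min {d*(P) : P a q^t-orbits hypermatrix,
`0 ≠ P ≤ M`}`, where `P ≤ M` means `supp P ⊆ supp M`. -/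
def mad {s : ℕ} (r : Fin s → ℕ) (q t : ℕ) (M : Idx r → F) : ℕ :=
  sInf {d | ∃ P : Idx r → F, IsOrbitMx r q t P ∧ P ≠ 0 ∧ hsupp P ⊆ hsupp M ∧ apd r P = d}

/-- The `q^t`-cyclotomic coset of `b` modulo `r`. -/
def cycCoset (r q t : ℕ) (b : ZMod r) : Set (ZMod r) :=
  {x | ∃ n : ℕ, x = (q : ZMod r) ^ (t * n) * b}



variable {F : Type*} [Field F] {L : Type*} [Field L] [Algebra F L]

/-- An abelian code: a subspace of the group algebra `F[∏ Z_{r k}]` (identified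
with the space of coefficient functions `I → F`) which is closed under all
translations, i.e. an ideal. -/
def IsAbelianCode {s : ℕ} {r : Fin s → ℕ} (C : Submodule F (Idx r → F)) : Prop :=
  ∀ f ∈ C, ∀ a : Idx r, (fun i => f (i - a)) ∈ C

/-- Convolution: the multiplication of the group algebra in the coefficient
function picture. -/
def conv {s : ℕ} {r : Fin s → ℕ} [∀ k, NeZero (r k)] (f g : Idx r → F) : Idx r → F :=
  fun i => ∑ u : Idx r, f u * g (i - u)

/-- The (discrete) Fourier transform `φ_{α,f}(j) = f(α^j)` of a coefficient
function `f : I → F` with respect to `α`, with values in the extension `L`. -/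
def fourier {s : ℕ} {r : Fin s → ℕ} [∀ k, NeZero (r k)] (α : Fin s → L) (f : Idx r → F) :
    Idx r → L :=
  fun j => ∑ i : Idx r, algebraMap F L (f i) * ∏ k, α k ^ ((i k).val * (j k).val)

/-- The Hamming weight of a codeword. -/
def wt {s : ℕ} {r : Fin s → ℕ} [∀ k, NeZero (r k)] (f : Idx r → F) : ℕ :=
  (Finset.univ.filter fun i : Idx r => f i ≠ 0).card

/-- The minimum distance of a code. -/
def dmin {s : ℕ} {r : Fin s → ℕ} [∀ k, NeZero (r k)] (C : Submodule F (Idx r → F)) : ℕ :=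
  sInf {w | ∃ f ∈ C, f ≠ (0 : Idx r → F) ∧ wt f = w}

/-- The defining set `D_α(C) = {a ∈ I : f(α^a) = 0 for all f ∈ C}`. -/
def defSet {s : ℕ} (r : Fin s → ℕ) [∀ k, NeZero (r k)] (α : Fin s → L)
    (C : Submodule F (Idx r → F)) : Set (Idx r) :=
  {a | ∀ f ∈ C, fourier α f a = 0}

/-- The apparent distance of a code `C` with respect to `α`:
`d_α*(C) = min {d*(M(φ_{α,e})) : 0 ≠ e = e² ∈ C}`. -/
def dStarAlpha {s : ℕ} (r : Fin s → ℕ) [∀ k, NeZero (r k)] (α : Fin s → L)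
    (C : Submodule F (Idx r → F)) : ℕ :=
  sInf {d | ∃ e, e ∈ C ∧ e ≠ (0 : Idx r → F) ∧ conv e e = e ∧ apd r (fourier α e) = d}

/-- The apparent distance of a code: `d*(C) = max {d_β*(C) : β ∈ U}`, where `U`
is the set of tuples of primitive roots of unity in `L`. -/
def dStarCode {s : ℕ} (r : Fin s → ℕ) [∀ k, NeZero (r k)] (L : Type*) [Field L] [Algebra F L]
    (C : Submodule F (Idx r → F)) : ℕ :=
  sSup {d | ∃ α : Fin s → L, (∀ k, IsPrimitiveRoot (α k) (r k)) ∧ dStarAlpha r α C = d}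

/-- The defining set of the multivariate BCH code `B_q(α,γ,δ,b)`:
`∪_{k∈γ} ∪_{l=0}^{δ_k−2} ∪_{i ∈ I(k, b_k+l)} Q(i)`. -/
def bchDefSet {s : ℕ} (r : Fin s → ℕ) (q : ℕ) (γ : Finset (Fin s)) (δ b : Fin s → ℕ) :
    Set (Idx r) :=
  ⋃ k ∈ γ, ⋃ l ∈ Finset.range (δ k - 1),
    ⋃ i ∈ {i : Idx r | i k = ((b k + l : ℕ) : ZMod (r k))}, qOrbit r q 1 i


/-!
After Fourier transform, multiplication in the group algebra becomes pointwise multiplication of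
hypermatrices over a field. In particular the group algebra is reduced, so multiplication by `f` is
injective on the ideal generated by `f`, hence bijective there by finite dimension. Therefore
`f = g * f * f` for some `g`, and `g * f` is a nonzero idempotent of the code. This is what makes
the minimum defining the apparent distance of the code a minimum over a nonempty set.

For the bound, let `M` be the transform of such an idempotent. It vanishes on `δ k - 1`
consecutive hypercolumns in each direction `k`. In one direction, the last nonzero hypercolumn
before the zero window is followed by at least `δ k - 1` zero ones. It is again a nonzero
hypermatrix with the same zero windows in the remaining directions, so induction multiplies the
factors `δ k`.
-/

theorem exists_forall_not_add_of_window {m : ℕ} [NeZero m] {P : ZMod m → Prop} (hP : ∃ x, P x)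
    {b : ZMod m} {n : ℕ} (hb : ∀ l : ℕ, l < n → ¬ P (b + l)) :
    ∃ c, P c ∧ ∀ i : ℕ, i ∈ Finset.Icc 1 n → ¬ P (c + i) := by
  have hback : ∃ t : ℕ, P (b - 1 - t) := by
    obtain ⟨x, hx⟩ := hP
    exact ⟨(b - 1 - x).val, by simpa using hx⟩
  -- The witness is the first entry satisfying `P` met when walking backwards from `b - 1`.
  refine ⟨b - 1 - Nat.find hback, Nat.find_spec hback, fun i hi => ?_⟩
  obtain ⟨hi1, hin⟩ := Finset.mem_Icc.mp hi
  obtain hit | hti := le_or_gt i (Nat.find hback)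
  · have hmin := Nat.find_min hback (m := Nat.find hback - i) (by lia)
    rwa [Nat.cast_sub hit, ← sub_add] at hmin
  · have hwin := hb (i - (Nat.find hback + 1)) (by lia)
    rw [Nat.cast_sub hti, Nat.cast_add_one] at hwin
    convert hwin using 2
    ring

section ApparentDistance

variable {s : ℕ} {r : Fin (s + 1) → ℕ}

theorem hypercol_removeNth {E : Type*} (M : Idx r → E) (k : Fin (s + 1)) (i : Idx r) :
    hypercol M k (i k) (k.removeNth i) = M i := by
  rw [hypercol, Fin.insertNth_self_removeNth]

theorem exists_hypercol_ne_zero {E : Type*} [Zero E] {M : Idx r → E} (hM : M ≠ 0)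
    (k : Fin (s + 1)) : ∃ b, hypercol M k b ≠ 0 := by
  obtain ⟨i, hi⟩ := Function.ne_iff.mp hM
  refine ⟨i k, fun hcol => hi ?_⟩
  rw [← hypercol_removeNth M k i, hcol, Pi.zero_apply, Pi.zero_apply]

theorem le_runLen {M : Idx r → F} {k : Fin (s + 1)} [NeZero (r k)] {b : ZMod (r k)} {n : ℕ}
    (hb : hypercol M k b ≠ 0) (hrun : ∀ i : ℕ, i ∈ Finset.Icc 1 n → hypercol M k (b + i) = 0) :
    n ≤ runLen M k b := by
  have hn : n < r k := by
    by_contra! hle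
    have hwrap := hrun (r k) (Finset.mem_Icc.mpr ⟨NeZero.one_le, hle⟩)
    rw [ZMod.natCast_self, add_zero] at hwrap
    exact hb hwrap
  calc n = (Finset.Icc 1 n).card := by simp
    _ ≤ runLen M k b := by
      refine Finset.card_le_card fun j hj => ?_
      obtain ⟨hj1, hjn⟩ := Finset.mem_Icc.mp hj
      simp only [Finset.mem_filter, Finset.mem_Ico]
      exact ⟨⟨hj1, hjn.trans_lt hn⟩, fun i hi => hrun i (Finset.Icc_subset_Icc_right hjn hi)⟩

theorem runLen_add_one_mul_apd_hypercol_le (M : Idx r → F) (k : Fin (s + 1)) [NeZero (r k)]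
    (b : ZMod (r k)) :
    (runLen M k b + 1) * apd (fun j => r (k.succAbove j)) (hypercol M k b) ≤ apd r M := by
  let term (k : Fin (s + 1)) (b : Fin (r k)) : ℕ := (runLen M k ((b : ℕ) : ZMod (r k)) + 1) *
    apd (fun j => r (k.succAbove j)) (hypercol M k ((b : ℕ) : ZMod (r k)))
  calc (runLen M k b + 1) * apd (fun j => r (k.succAbove j)) (hypercol M k b)
      = term k ⟨b.val, b.val_lt⟩ := by simp only [term, ZMod.natCast_zmod_val]
    _ ≤ Finset.univ.sup (term k) := Finset.le_sup (Finset.mem_univ _)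
    _ ≤ Finset.univ.sup fun k => Finset.univ.sup (term k) :=
      Finset.le_sup (f := fun k => Finset.univ.sup (term k)) (Finset.mem_univ k)
    _ = apd r M := by rw [apd]

end ApparentDistance

theorem prod_le_apd {s : ℕ} (r : Fin s → ℕ) [∀ k, NeZero (r k)] {M : Idx r → F} (hM : M ≠ 0)
    (δ : Fin s → ℕ) (b : Idx r)
    (hz : ∀ k, ∀ l : ℕ, l + 1 < δ k → ∀ i : Idx r, i k = b k + l → M i = 0) :
    ∏ k, δ k ≤ apd r M := by
  induction s with
  | zero =>
    have hscalar : M finZeroElim ≠ 0 := by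
      obtain ⟨i, hi⟩ := Function.ne_iff.mp hM
      rwa [Subsingleton.elim i finZeroElim] at hi
    simp [apd, hscalar]
  | succ s ih =>
    have hwindow : ∀ l : ℕ, l < δ 0 - 1 → ¬ hypercol M 0 (b 0 + l) ≠ 0 := fun l hl =>
      not_not.mpr (funext fun i => hz 0 l (by lia) _ (Fin.insertNth_apply_same ..))
    obtain ⟨c, hc, hrun⟩ :=
      exists_forall_not_add_of_window (exists_hypercol_ne_zero hM 0) hwindow
    have hrunLen : δ 0 ≤ runLen M 0 c + 1 :=
      Nat.sub_le_iff_le_add.mp (le_runLen hc fun i hi => not_not.mp (hrun i hi))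
    have hrest : ∏ j, δ (Fin.succAbove 0 j) ≤ apd _ (hypercol M 0 c) :=
      ih _ hc _ (fun j => b (Fin.succAbove 0 j)) fun k l hl i hi =>
        hz (Fin.succAbove 0 k) l hl _ (by rw [Fin.insertNth_apply_succAbove, hi])
    calc ∏ k, δ k = δ 0 * ∏ j, δ (Fin.succAbove 0 j) := Fin.prod_univ_succAbove δ 0
      _ ≤ (runLen M 0 c + 1) * apd _ (hypercol M 0 c) := Nat.mul_le_mul hrunLen hrest
      _ ≤ apd r M := runLen_add_one_mul_apd_hypercol_le M 0 c

section Characters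

variable {s : ℕ} {r : Fin s → ℕ} [∀ k, NeZero (r k)] {R : Type*} [CommMonoid R] {ζ : Fin s → R}

/-- The character `i ↦ ∏ k, ζ k ^ (i k * j k)` of `I`, through which the coefficients of `f` enter
the value `f(ζ^j)` computed by `fourier`. -/
def evalChar (hζ : ∀ k, ζ k ^ r k = 1) (j : Idx r) : AddChar (Idx r) R where
  toFun i := ∏ k, ζ k ^ ((i k).val * (j k).val)
  map_zero_eq_one' := by simp
  map_add_eq_mul' i i' := by
    simp only [← Finset.prod_mul_distrib, Pi.add_apply, ZMod.val_add, pow_mul, ← pow_add,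
      ← pow_eq_pow_mod _ (hζ _), ← mul_pow]

theorem evalChar_comm (hζ : ∀ k, ζ k ^ r k = 1) (i j : Idx r) :
    evalChar hζ i j = evalChar hζ j i := by
  simp only [evalChar, AddChar.coe_mk, mul_comm]

theorem evalChar_single_one (hζ : ∀ k, ζ k ^ r k = 1) (j : Idx r) (k : Fin s) :
    evalChar hζ j (Pi.single k 1) = ζ k ^ (j k).val := by
  have hother : ∀ m ∈ Finset.univ, m ≠ k →
      ζ m ^ (((Pi.single k 1 : Idx r) m).val * (j m).val) = 1 := fun m _ hm => by
    rw [Pi.single_eq_of_ne hm, ZMod.val_zero, zero_mul, pow_zero]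
  rw [evalChar, AddChar.coe_mk, Finset.prod_eq_single k hother (by simp), Pi.single_eq_same,
    ZMod.val_one_eq_one_mod, pow_mul, ← pow_eq_pow_mod _ (hζ k), pow_one]

theorem evalChar_injective (hζ : ∀ k, IsPrimitiveRoot (ζ k) (r k)) :
    Function.Injective (evalChar fun k => (hζ k).pow_eq_one) := fun i j hij => by
  funext k
  apply ZMod.val_injective
  apply (hζ k).pow_inj (ZMod.val_lt _) (ZMod.val_lt _)
  rw [← evalChar_single_one fun k => (hζ k).pow_eq_one, hij, evalChar_single_one]

end Characters

section Fourier

variable {s : ℕ} {r : Fin s → ℕ} [∀ k, NeZero (r k)] {α : Fin s → L}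

theorem fourier_apply (hα : ∀ k, α k ^ r k = 1) (f : Idx r → F) (j : Idx r) :
    fourier α f j = ∑ i, algebraMap F L (f i) * evalChar hα j i := rfl

theorem fourier_zero (α : Fin s → L) : fourier α (0 : Idx r → F) = 0 := by
  funext j
  simp [fourier]

theorem fourier_injective (hα : ∀ k, IsPrimitiveRoot (α k) (r k)) :
    Function.Injective (fourier α : (Idx r → F) → Idx r → L) := by
  have hind : LinearIndependent L fun i => ⇑(evalChar (fun k => (hα k).pow_eq_one) i) :=
    (linearIndependent_monoidHom (Multiplicative (Idx r)) L).comp _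
      (AddChar.toMonoidHomEquiv.injective.comp (evalChar_injective hα))
  have hfourier : (fourier α : (Idx r → F) → Idx r → L) =
      Fintype.linearCombination L (fun i => ⇑(evalChar (fun k => (hα k).pow_eq_one) i)) ∘
        (algebraMap F L ∘ ·) := by
    funext f j
    simp only [fourier_apply fun k => (hα k).pow_eq_one, Function.comp_apply,
      Fintype.linearCombination_apply, Finset.sum_apply, Pi.smul_apply, smul_eq_mul,
      evalChar_comm _ j]
  rw [hfourier]
  exact hind.fintypeLinearCombination_injective.comp (algebraMap F L).injective.comp_left

theorem fourier_eq_zero_iff (hα : ∀ k, IsPrimitiveRoot (α k) (r k)) {f : Idx r → F} :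
    fourier α f = 0 ↔ f = 0 :=
  (fourier_injective hα).eq_iff' (fourier_zero α)

theorem fourier_conv (hα : ∀ k, α k ^ r k = 1) (f g : Idx r → F) :
    fourier α (conv f g) = fourier α f * fourier α g := by
  funext j
  let χ := evalChar hα j
  have hshift : ∀ u, ∑ i, algebraMap F L (g (i - u)) * χ i = χ u * fourier α g j := fun u => by
    rw [← Equiv.sum_comp (Equiv.addRight u), fourier_apply hα, Finset.mul_sum]
    refine Finset.sum_congr rfl fun i _ => ?_
    rw [Equiv.coe_addRight, add_sub_cancel_right, AddChar.map_add_eq_mul]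
    ring
  calc fourier α (conv f g) j
      = ∑ i, ∑ u, algebraMap F L (f u) * algebraMap F L (g (i - u)) * χ i := by
        simp only [fourier_apply hα, conv, map_sum, map_mul, Finset.sum_mul, χ]
    _ = ∑ u, algebraMap F L (f u) * ∑ i, algebraMap F L (g (i - u)) * χ i := by
        rw [Finset.sum_comm]
        simp only [Finset.mul_sum, mul_assoc]
    _ = ∑ u, algebraMap F L (f u) * χ u * fourier α g j := by simp only [hshift, mul_assoc]
    _ = (fourier α f * fourier α g) j := by
        rw [← Finset.sum_mul, Pi.mul_apply, fourier_apply hα f]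

end Fourier

section Codes

variable {s : ℕ} {r : Fin s → ℕ} [∀ k, NeZero (r k)]

/-- Multiplication by `f` in the group algebra, as an `F`-linear endomorphism. -/
def convRight (f : Idx r → F) : Module.End F (Idx r → F) where
  toFun g := conv g f
  map_add' g h := by
    funext i
    simp only [conv, Pi.add_apply, add_mul, Finset.sum_add_distrib]
  map_smul' c g := by
    funext i
    simp only [conv, Pi.smul_apply, smul_eq_mul, mul_assoc, Finset.mul_sum, RingHom.id_apply]

theorem convRight_apply (f g : Idx r → F) : convRight f g = conv g f := rfl

theorem single_conv (f : Idx r → F) : conv (Pi.single 0 1) f = f := by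
  funext i
  simp [conv, Pi.single_apply]

theorem IsAbelianCode.conv_mem {C : Submodule F (Idx r → F)} (hC : IsAbelianCode C)
    (f : Idx r → F) {g : Idx r → F} (hg : g ∈ C) : conv f g ∈ C := by
  have hsum : conv f g = ∑ u, f u • fun i => g (i - u) := by
    funext i
    simp only [conv, Finset.sum_apply, Pi.smul_apply, smul_eq_mul]
  rw [hsum]
  exact Submodule.sum_mem _ fun u _ => Submodule.smul_mem _ _ (hC g hg u)

variable {α : Fin s → L}

theorem exists_conv_conv_eq_self (hα : ∀ k, IsPrimitiveRoot (α k) (r k)) (f : Idx r → F) :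
    ∃ g, conv (conv g f) f = f := by
  have hconv := fourier_conv (F := F) fun k => (hα k).pow_eq_one
  have hinj : Set.InjOn (convRight f) (convRight f).range := by
    rintro _ ⟨g, rfl⟩ _ ⟨h, rfl⟩ hgh
    simp only [convRight_apply] at hgh ⊢
    apply fourier_injective hα
    funext j
    simpa [hconv] using congrFun (congrArg (fourier α) hgh) j
  have hsurj := (LinearMap.injOn_iff_surjOn (f := convRight f)
    fun x _ => LinearMap.mem_range_self _ x).mp hinj
  obtain ⟨_, ⟨g, rfl⟩, hg⟩ := hsurj ⟨Pi.single 0 1, single_conv f⟩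
  exact ⟨g, hg⟩

theorem IsAbelianCode.exists_idempotent_ne_zero {C : Submodule F (Idx r → F)}
    (hC : IsAbelianCode C) (hC0 : C ≠ ⊥) (hα : ∀ k, IsPrimitiveRoot (α k) (r k)) :
    ∃ e ∈ C, e ≠ 0 ∧ conv e e = e := by
  have hconv := fourier_conv (F := F) fun k => (hα k).pow_eq_one
  obtain ⟨f, hf, hf0⟩ := Submodule.exists_mem_ne_zero_of_ne_bot hC0
  obtain ⟨g, hg⟩ := exists_conv_conv_eq_self hα f
  refine ⟨conv g f, hC.conv_mem g hf, fun he0 => hf0 ?_, fourier_injective hα ?_⟩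
  · rw [← hg, he0]
    exact map_zero (convRight f)
  · have hgf : fourier α g * fourier α f * fourier α f = fourier α f := by
      rw [← hconv, ← hconv, hg]
    calc fourier α (conv (conv g f) (conv g f))
        = fourier α g * (fourier α g * fourier α f * fourier α f) := by
          rw [hconv, hconv]
          ring
      _ = fourier α (conv g f) := by rw [hgf, hconv]

theorem dStarAlpha_le_dStarCode (C : Submodule F (Idx r → F))
    (hα : ∀ k, IsPrimitiveRoot (α k) (r k)) : dStarAlpha r α C ≤ dStarCode r L C := by
  have hfin : {β : Fin s → L | ∀ k, IsPrimitiveRoot (β k) (r k)}.Finite :=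
    (Fintype.piFinset fun k => primitiveRoots (r k) L).finite_toSet.subset fun β hβ =>
      Fintype.mem_piFinset.mpr fun k => (mem_primitiveRoots (NeZero.pos (r k))).mpr (hβ k)
  exact le_csSup (hfin.image fun β => dStarAlpha r β C).bddAbove ⟨α, hα, rfl⟩

end Codes

theorem multivariate_bch_bound_defSet_general {s : ℕ} {r : Fin s → ℕ} [∀ k, NeZero (r k)]
    {α : Fin s → L} (hα : ∀ k, IsPrimitiveRoot (α k) (r k))
    {C : Submodule F (Idx r → F)} (hC : IsAbelianCode C) (hC0 : C ≠ ⊥)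
    {γ : Finset (Fin s)} {δ : Fin s → ℕ} {b : Idx r}
    (hsub : ∀ k ∈ γ, ∀ l : ℕ, l + 1 < δ k → {i : Idx r | i k = b k + l} ⊆ defSet r α C) :
    ∏ k ∈ γ, δ k ≤ dStarCode r L C := by
  refine le_trans (le_csInf ?_ ?_) (dStarAlpha_le_dStarCode C hα)
  · obtain ⟨e, he, he0, hee⟩ := hC.exists_idempotent_ne_zero hC0 hα
    exact ⟨_, e, he, he0, hee, rfl⟩
  rintro _ ⟨e, he, he0, -, rfl⟩
  calc ∏ k ∈ γ, δ k = ∏ k, if k ∈ γ then δ k else 1 := by simp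
    _ ≤ apd r (fourier α e) := by
      refine prod_le_apd r ((fourier_eq_zero_iff hα).not.mpr he0) _ b fun k l hl i hi => ?_
      split_ifs at hl with hk
      · exact hsub k hk l hl hi e he
      · lia

/-- Let `γ ⊆ {1,…,s}`, `δ_k ≥ 2`, `b_k ≥ 0` for `k ∈ γ`, and
for each `k ∈ γ` let `J_k = {b_k, b_k+1, …, b_k+δ_k−2}` (modulo `r_k`) and
`A_k = {i ∈ I : i(k) ∈ J_k}`.  If `C` is a nonzero abelian code with
`∪_{k∈γ} A_k ⊆ D_α(C)` for some `α ∈ U`, then `d*(C) ≥ ∏_{k∈γ} δ_k`. -/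
theorem multivariate_bch_bound_defSet
    {s : ℕ} (r : Fin s → ℕ) [∀ k, NeZero (r k)]
    {F : Type*} [Field F] [Fintype F]
    (hcop : ∀ k, (Fintype.card F).Coprime (r k))
    (L : Type*) [Field L] [Algebra F L]
    (α : Fin s → L) (hα : ∀ k, IsPrimitiveRoot (α k) (r k))
    (C : Submodule F (Idx r → F)) (hC : IsAbelianCode C) (hC0 : C ≠ ⊥)
    (γ : Finset (Fin s)) (δ b : Fin s → ℕ) (hδ : ∀ k ∈ γ, 2 ≤ δ k)
    (hsub : ∀ k ∈ γ, {i : Idx r | ∃ l : ℕ, l ≤ δ k - 2 ∧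
      i k = ((b k + l : ℕ) : ZMod (r k))} ⊆ defSet r α C) :
    (∏ k ∈ γ, δ k) ≤ dStarCode r L C := by
  exact multivariate_bch_bound_defSet_general hα hC hC0 (b := fun k => b k) fun k hk l hl i hi =>
    hsub k hk ⟨l, by lia, by rw [hi, Nat.cast_add]⟩

end AbelianCodes
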